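/- arXiv:1101.1724 — 2 statements merged into one kernel-verified Lean document; each statement's English description precedes it below -/
import Mathlib

section
/- (The preimage T^{-1}{S̄} has exactly two elements.) Let X' : {1,2,3,…} → {−1,1} be another sign sequence with walk S' such that {i ≥ 1 : S'_{i−1}·S'_{i+1} < 0} is infinite, and suppose T(S') = T(S). Then S' = S or S' = −S. -/
noncomputable section

/-- The walk `S` associated with the sign sequence `X : {1,2,…} → {−1,1}`:
`S 0 = 0`, `S n = X 1 + ⋯ + X n`. -/
def cvWalk (X : ℕ → ℤ) (n : ℕ) : ℤ := ∑ j ∈ Finset.Icc 1 n, X j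

/-- The crossing times of `S`: `τ 0 = 0` and
`τ (l+1) = min {i > τ l : S (i-1) * S (i+1) < 0}`. -/
def cvTau (X : ℕ → ℤ) : ℕ → ℕ
  | 0 => 0
  | l + 1 => sInf {i : ℕ | cvTau X l < i ∧ cvWalk X (i - 1) * cvWalk X (i + 1) < 0}

/-- The increments of the Csaki–Vincze transform `S̄ = T(S)`:
`X̄ j = Σ_{l ≥ 0} (−1)^(l+1) · X 1 · X (j+1) · 1_{τ l + 1 ≤ j ≤ τ (l+1)}`
(the sum may be truncated to `l ≤ j` since `l ≤ τ l` whenever `τ l + 1 ≤ j`). -/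
def cvXbar (X : ℕ → ℤ) (j : ℕ) : ℤ :=
  ∑ l ∈ Finset.range (j + 1),
    (-1 : ℤ) ^ (l + 1) * X 1 * X (j + 1) *
      (if cvTau X l + 1 ≤ j ∧ j ≤ cvTau X (l + 1) then 1 else 0)

/-- The Csaki–Vincze transform `S̄ = T(S)`. -/
def cvSbar (X : ℕ → ℤ) (n : ℕ) : ℤ := ∑ j ∈ Finset.Icc 1 n, cvXbar X j

/-- `Ȳ`-type process of a walk `f`: `max_{0 ≤ k ≤ n} f k − f n`. -/
def cvYof (f : ℕ → ℤ) (n : ℕ) : ℤ :=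
  (Finset.range (n + 1)).sup' Finset.nonempty_range_add_one f - f n

/-- `Ȳ n = max_{0 ≤ k ≤ n} S̄ k − S̄ n`. -/
def cvYbar (X : ℕ → ℤ) (n : ℕ) : ℤ := cvYof (cvSbar X) n

/-!
Let `N j` be the number of crossings of the walk before time `j ≥ 1`. The block of crossing times
containing `j` has index `N j`, so the transform reads `X̄ j = (-1) ^ (N j + 1) * X 1 * X (j + 1)`,
where `N j` depends on `S` only through `S 0, …, S j`, and does not change when `S` is negated.
Hence, once `X' = c * X` is known on `{1, …, j}` for a sign `c`, both transforms have the same sign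
in front, and equality of `X̄' j = X̄ j` gives `X' (j + 1) = c * X (j + 1)`: the first step
determines everything else.
-/

/-- The walk `S` crosses zero at time `i`: the values `S (i - 1)` and `S (i + 1)` have strictly
opposite signs. The crossing times `cvTau X l`, `1 ≤ l`, enumerate these `i` in increasing order.
The condition `1 ≤ i` keeps `i - 1` from truncating. -/
def IsCrossing (X : ℕ → ℤ) (i : ℕ) : Prop :=
  1 ≤ i ∧ cvWalk X (i - 1) * cvWalk X (i + 1) < 0

instance (X : ℕ → ℤ) : DecidablePred (IsCrossing X) :=
  fun _ ↦ inferInstanceAs (Decidable (_ ∧ _))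

variable {X X' : ℕ → ℤ}

lemma cvTau_succ_eq_nth (X : ℕ → ℤ) (l : ℕ) :
    cvTau X (l + 1) = Nat.nth (IsCrossing X) (Nat.count (IsCrossing X) (cvTau X l + 1)) := by
  rw [Nat.nth_count_eq_sInf, cvTau]
  congr 1 with i
  simp only [IsCrossing, Set.mem_ofPred_eq]
  grind

lemma count_cvTau_add_one (hX : {i | IsCrossing X i}.Infinite) (l : ℕ) :
    Nat.count (IsCrossing X) (cvTau X l + 1) = l := by
  induction l with
  | zero => simp [cvTau, Nat.count_succ, IsCrossing]
  | succ l ih => rw [cvTau_succ_eq_nth, ih, Nat.count_nth_succ_of_infinite hX]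

lemma cvTau_lt_iff_le_count (hX : {i | IsCrossing X i}.Infinite) {j : ℕ} (hj : 1 ≤ j) (l : ℕ) :
    cvTau X l < j ↔ l ≤ Nat.count (IsCrossing X) j := by
  cases l with
  | zero => exact iff_of_true hj (Nat.zero_le _)
  | succ l =>
    rw [cvTau_succ_eq_nth, count_cvTau_add_one hX, ← Nat.lt_nth_iff_count_lt hX, Nat.succ_le_iff]

lemma cvXbar_eq_neg_one_pow_count (hX : {i | IsCrossing X i}.Infinite) {j : ℕ} (hj : 1 ≤ j) :
    cvXbar X j = (-1) ^ (Nat.count (IsCrossing X) j + 1) * X 1 * X (j + 1) := by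
  have mem_block_iff (l : ℕ) :
      cvTau X l + 1 ≤ j ∧ j ≤ cvTau X (l + 1) ↔ Nat.count (IsCrossing X) j = l := by
    rw [Nat.succ_le_iff, ← not_lt, cvTau_lt_iff_le_count hX hj, cvTau_lt_iff_le_count hX hj]
    omega
  have count_mem : Nat.count (IsCrossing X) j ∈ Finset.range (j + 1) :=
    Finset.mem_range_succ_iff.2 (Nat.count_le _)
  simp only [cvXbar, mem_block_iff, mul_boole, Finset.sum_ite_eq, count_mem, if_true]

lemma cvXbar_eq_of_cvSbar_eq (hT : ∀ n, cvSbar X' n = cvSbar X n) {j : ℕ} (hj : 1 ≤ j) :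
    cvXbar X' j = cvXbar X j := by
  have cvXbar_eq_sub (Y : ℕ → ℤ) : cvXbar Y j = cvSbar Y j - cvSbar Y (j - 1) := by
    obtain ⟨n, rfl⟩ := Nat.exists_eq_add_of_le' hj
    rw [Nat.add_sub_cancel, eq_sub_iff_add_eq', cvSbar, cvSbar, Finset.sum_Icc_succ_top hj]
  rw [cvXbar_eq_sub, cvXbar_eq_sub, hT, hT]

section Proportional

variable {c : ℤ} {n : ℕ}

lemma cvWalk_eq_mul (h : ∀ i ∈ Finset.Icc 1 n, X' i = c * X i) : cvWalk X' n = c * cvWalk X n := by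
  rw [cvWalk, cvWalk, Finset.mul_sum]
  exact Finset.sum_congr rfl h

lemma count_isCrossing_eq (hc : c ≠ 0) (h : ∀ i ∈ Finset.Icc 1 n, X' i = c * X i) :
    Nat.count (IsCrossing X') n = Nat.count (IsCrossing X) n := by
  have walk_eq {m : ℕ} (hm : m ≤ n) : cvWalk X' m = c * cvWalk X m :=
    cvWalk_eq_mul fun i hi ↦ h i (Finset.Icc_subset_Icc_right hm hi)
  have crossing_iff {i : ℕ} (hi : i < n) : IsCrossing X' i ↔ IsCrossing X i := by
    rw [IsCrossing, IsCrossing, walk_eq (by omega : i - 1 ≤ n), walk_eq hi, mul_mul_mul_comm,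
      ← smul_eq_mul (c * c), smul_neg_iff_of_pos_left (mul_self_pos.2 hc)]
  exact le_antisymm (Nat.count_mono_left fun i hi ↦ (crossing_iff hi).1)
    (Nat.count_mono_left fun i hi ↦ (crossing_iff hi).2)

lemma eq_mul_succ_of_cvXbar_eq (hX : {i | IsCrossing X i}.Infinite)
    (hX' : {i | IsCrossing X' i}.Infinite) (hX1 : X 1 ≠ 0) (hc : c * c = 1) (hn : 1 ≤ n)
    (h : ∀ i ∈ Finset.Icc 1 n, X' i = c * X i) (hbar : cvXbar X' n = cvXbar X n) :
    X' (n + 1) = c * X (n + 1) := by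
  have hc0 : c ≠ 0 := left_ne_zero_of_mul_eq_one hc
  rw [cvXbar_eq_neg_one_pow_count hX hn, cvXbar_eq_neg_one_pow_count hX' hn,
    count_isCrossing_eq hc0 h, h 1 (Finset.left_mem_Icc.2 hn)] at hbar
  simp only [mul_assoc] at hbar
  have cancel_sign : c * (X 1 * X' (n + 1)) = X 1 * X (n + 1) :=
    mul_left_cancel₀ (pow_ne_zero _ (by decide : (-1 : ℤ) ≠ 0)) hbar
  refine mul_left_cancel₀ (mul_ne_zero hc0 hX1) ?_
  linear_combination cancel_sign - X 1 * X (n + 1) * hc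

end Proportional

lemma eq_mul_of_cvSbar_eq {c : ℤ} (hX : {i | IsCrossing X i}.Infinite)
    (hX' : {i | IsCrossing X' i}.Infinite) (hX1 : X 1 ≠ 0) (hc : c * c = 1) (h1 : X' 1 = c * X 1)
    (hT : ∀ n, cvSbar X' n = cvSbar X n) {j : ℕ} (hj : 1 ≤ j) : X' j = c * X j := by
  induction j using Nat.strong_induction_on with
  | h j ih =>
    obtain _ | n := j
    · contradiction
    obtain rfl | hn := n.eq_zero_or_pos
    · exact h1
    · refine eq_mul_succ_of_cvXbar_eq hX hX' hX1 hc hn (fun i hi ↦ ?_)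
        (cvXbar_eq_of_cvSbar_eq hT hn)
      rw [Finset.mem_Icc] at hi
      exact ih i (by omega) hi.1

theorem cv_preimage_two_elements_general (hX1 : X 1 ≠ 0) (hX : {i | IsCrossing X i}.Infinite)
    (h1 : X' 1 = X 1 ∨ X' 1 = -X 1) (hX' : {i | IsCrossing X' i}.Infinite)
    (hT : ∀ n, cvSbar X' n = cvSbar X n) :
    (∀ n, cvWalk X' n = cvWalk X n) ∨ (∀ n, cvWalk X' n = -cvWalk X n) := by
  have walk_eq {c : ℤ} (hc : c * c = 1) (h : X' 1 = c * X 1) (n : ℕ) :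
      cvWalk X' n = c * cvWalk X n :=
    cvWalk_eq_mul fun _ hi ↦
      eq_mul_of_cvSbar_eq hX hX' hX1 hc h hT (Finset.mem_Icc.1 hi).1
  refine h1.imp (fun h n ↦ ?_) (fun h n ↦ ?_)
  · simpa using walk_eq (c := 1) rfl (by simpa using h) n
  · simpa using walk_eq (c := -1) rfl (by simpa using h) n

/-- **The preimage `T⁻¹{S̄}` has exactly two elements.** If `X'` is another sign sequence
whose walk `S'` has infinitely many crossings and `T(S') = T(S)`, then `S' = S` or
`S' = −S`. -/
theorem cv_preimage_two_elements (X : ℕ → ℤ) (hX : ∀ j, 1 ≤ j → X j = 1 ∨ X j = -1)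
    (hinf : {i : ℕ | 1 ≤ i ∧ cvWalk X (i - 1) * cvWalk X (i + 1) < 0}.Infinite)
    (X' : ℕ → ℤ) (hX' : ∀ j, 1 ≤ j → X' j = 1 ∨ X' j = -1)
    (hinf' : {i : ℕ | 1 ≤ i ∧ cvWalk X' (i - 1) * cvWalk X' (i + 1) < 0}.Infinite)
    (hT : ∀ n, cvSbar X' n = cvSbar X n) :
    (∀ n, cvWalk X' n = cvWalk X n) ∨ (∀ n, cvWalk X' n = -cvWalk X n) := by
  have first_steps : X 1 ≠ 0 ∧ (X' 1 = X 1 ∨ X' 1 = -X 1) := by grind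
  exact cv_preimage_two_elements_general first_steps.1 hinf first_steps.2 hinf' hT
end
end

section
/- Suppose [p,q] is an excursion of Ȳ contained in [τ_l, τ_{l+1}] for some l ≥ 0 and q = τ_{l+1} − 2 (it is the unique excursion of Ȳ in [τ_l, τ_{l+1}]). Then S_k ≠ 0 for every k with τ_l < k < τ_{l+1}; that is, the first zero of S after τ_l is τ_{l+1}. -/
noncomputable section

/-- `[p, q]` is an excursion of `Ȳ`: `Ȳ p = Ȳ (p−1) = Ȳ q = Ȳ (q+1) = 0`
(with the convention `Ȳ (−1) = 0`, which is handled by truncated subtraction since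
`Ȳ 0 = 0` anyway) and for every `p ≤ j < q`, `Ȳ j = 0` implies `Ȳ (j+1) = 1`. -/
def cvIsExcursion (X : ℕ → ℤ) (p q : ℕ) : Prop :=
  p < q ∧ cvYbar X p = 0 ∧ cvYbar X (p - 1) = 0 ∧ cvYbar X q = 0 ∧ cvYbar X (q + 1) = 0 ∧
    ∀ j, p ≤ j → j < q → cvYbar X j = 0 → cvYbar X (j + 1) = 1

/-!
Call an edge of `S` positive or negative according to the side of the axis on which it lies. The
side changes exactly at the crossing times, so on `[τ l, τ (l + 1))` it is constantly
`c = (-1) ^ l * X 1`, and the last edge before the crossing runs from `S (τ (l + 1) - 1) = c` to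
`S (τ (l + 1)) = 0`. On the same block the transform satisfies `X̄ j = -c * X (j + 1)`, hence
`S̄ n + c * S (n + 1)` is constant there. If `S̄` attains its running maximum at
`q = τ (l + 1) - 2`, it follows that `c * S k ≥ c * S (q + 1) = 1` for `τ l < k < τ (l + 1)`.
-/

/-- The crossing times of the walk `S`, i.e. the set enumerated by `cvTau X` from index `1` on. -/
def cvCrossings (X : ℕ → ℤ) : Set ℕ :=
  {i | 1 ≤ i ∧ cvWalk X (i - 1) * cvWalk X (i + 1) < 0}

/-- The side of the axis on which the edge of `S` from time `n` to time `n + 1` lies: the sign of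
(twice) the height of its midpoint, which is never `0` for a walk with steps `±1`. -/
def cvSide (X : ℕ → ℤ) (n : ℕ) : ℤ := (cvWalk X n + cvWalk X (n + 1)).sign

variable {X : ℕ → ℤ}

theorem cvWalk_succ (X : ℕ → ℤ) (n : ℕ) : cvWalk X (n + 1) = cvWalk X n + X (n + 1) :=
  Finset.sum_Icc_succ_top (Nat.le_add_left 1 n) X

theorem cvSbar_succ (X : ℕ → ℤ) (n : ℕ) : cvSbar X (n + 1) = cvSbar X n + cvXbar X (n + 1) :=
  Finset.sum_Icc_succ_top (Nat.le_add_left 1 n) (cvXbar X)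

theorem le_of_cvYof_eq_zero {f : ℕ → ℤ} {k n : ℕ} (hf : cvYof f n = 0) (hk : k ≤ n) :
    f k ≤ f n :=
  (Finset.le_sup' f (Finset.mem_range_succ_iff.2 hk)).trans_eq (sub_eq_zero.1 hf)

section Sides

theorem cvSide_zero (hX : ∀ j, 1 ≤ j → X j = 1 ∨ X j = -1) : cvSide X 0 = X 1 := by
  rcases hX 1 le_rfl with h | h <;> simp [cvSide, cvWalk, h]

theorem cvWalk_succ_eq_or (hX : ∀ j, 1 ≤ j → X j = 1 ∨ X j = -1) (n : ℕ) :
    cvWalk X (n + 1) = cvWalk X n + 1 ∨ cvWalk X (n + 1) = cvWalk X n - 1 := by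
  rw [cvWalk_succ]
  exact (hX (n + 1) (Nat.le_add_left 1 n)).imp (congrArg _) (congrArg _)

theorem cvSide_succ_of_mul_nonneg (hX : ∀ j, 1 ≤ j → X j = 1 ∨ X j = -1) {n : ℕ}
    (hn : 0 ≤ cvWalk X n * cvWalk X (n + 2)) : cvSide X (n + 1) = cvSide X n := by
  have step₁ := cvWalk_succ_eq_or hX n
  have step₂ : cvWalk X (n + 2) = _ ∨ cvWalk X (n + 2) = _ := cvWalk_succ_eq_or hX (n + 1)
  change (cvWalk X (n + 1) + cvWalk X (n + 2)).sign = (cvWalk X n + cvWalk X (n + 1)).sign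
  rcases lt_trichotomy (cvWalk X (n + 1)) 0 with hneg | hzero | hpos
  · rw [Int.sign_eq_neg_one_of_neg (by omega), Int.sign_eq_neg_one_of_neg (by omega)]
  · have bounce : cvWalk X (n + 2) = cvWalk X n := by
      rcases mul_nonneg_iff.1 hn with h | h <;> omega
    rw [bounce, add_comm]
  · rw [Int.sign_eq_one_of_pos (by omega), Int.sign_eq_one_of_pos (by omega)]

theorem cvWalk_succ_eq_zero_of_mul_neg (hX : ∀ j, 1 ≤ j → X j = 1 ∨ X j = -1) {n : ℕ}
    (hn : cvWalk X n * cvWalk X (n + 2) < 0) : cvWalk X (n + 1) = 0 := by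
  have step₁ := cvWalk_succ_eq_or hX n
  have step₂ : cvWalk X (n + 2) = _ ∨ cvWalk X (n + 2) = _ := cvWalk_succ_eq_or hX (n + 1)
  rcases mul_neg_iff.1 hn with h | h <;> omega

theorem cvSide_succ_of_mul_neg (hX : ∀ j, 1 ≤ j → X j = 1 ∨ X j = -1) {n : ℕ}
    (hn : cvWalk X n * cvWalk X (n + 2) < 0) : cvSide X (n + 1) = -cvSide X n := by
  have hzero := cvWalk_succ_eq_zero_of_mul_neg hX hn
  have step₁ := cvWalk_succ_eq_or hX n
  have step₂ : cvWalk X (n + 2) = _ ∨ cvWalk X (n + 2) = _ := cvWalk_succ_eq_or hX (n + 1)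
  have reflect : cvWalk X (n + 2) = -cvWalk X n := by
    rcases mul_neg_iff.1 hn with h | h <;> omega
  rw [cvSide, cvSide, hzero, reflect, zero_add, add_zero, Int.sign_neg]

theorem cvSide_eq_cvWalk (hX : ∀ j, 1 ≤ j → X j = 1 ∨ X j = -1) {n : ℕ}
    (hn : cvWalk X (n + 1) = 0) : cvSide X n = cvWalk X n := by
  have step := cvWalk_succ_eq_or hX n
  rw [cvSide, hn, add_zero]
  obtain h | h : cvWalk X n = -1 ∨ cvWalk X n = 1 := by omega
  all_goals rw [h]; rfl

end Sides

section CrossingTimes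

theorem cvTau_succ_mem (hinf : (cvCrossings X).Infinite) (l : ℕ) :
    cvTau X l < cvTau X (l + 1) ∧
      cvWalk X (cvTau X (l + 1) - 1) * cvWalk X (cvTau X (l + 1) + 1) < 0 := by
  obtain ⟨i, hi, hlt⟩ := hinf.exists_gt (cvTau X l)
  rw [cvTau]
  exact Nat.sInf_mem
    (s := {i | cvTau X l < i ∧ cvWalk X (i - 1) * cvWalk X (i + 1) < 0}) ⟨i, hlt, hi.2⟩

theorem cvTau_strictMono (hinf : (cvCrossings X).Infinite) : StrictMono (cvTau X) :=
  strictMono_nat_of_lt_succ fun l ↦ (cvTau_succ_mem hinf l).1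

theorem exists_cvTau_succ_eq (hinf : (cvCrossings X).Infinite) (l : ℕ) :
    ∃ n, cvTau X (l + 1) = n + 1 ∧ cvTau X l ≤ n ∧ cvWalk X n * cvWalk X (n + 2) < 0 := by
  obtain ⟨hlt, hneg⟩ := cvTau_succ_mem hinf l
  obtain ⟨n, hn⟩ := Nat.exists_eq_add_one_of_ne_zero (Nat.ne_zero_of_lt hlt)
  rw [hn] at hlt hneg
  exact ⟨n, hn, Nat.le_of_lt_succ hlt, hneg⟩

theorem cvWalk_mul_nonneg_of_lt_cvTau_succ {l n : ℕ} (hl : cvTau X l ≤ n)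
    (hn : n + 1 < cvTau X (l + 1)) : 0 ≤ cvWalk X n * cvWalk X (n + 2) := by
  rw [cvTau] at hn
  by_contra! hneg
  exact Nat.notMem_of_lt_sInf hn ⟨Nat.lt_succ_of_le hl, hneg⟩

theorem cvSide_eq_cvSide_cvTau (hX : ∀ j, 1 ≤ j → X j = 1 ∨ X j = -1) {l n : ℕ}
    (hl : cvTau X l ≤ n) (hn : n < cvTau X (l + 1)) : cvSide X n = cvSide X (cvTau X l) := by
  induction n, hl using Nat.le_induction with
  | base => rfl
  | succ n hl ih =>
    rw [cvSide_succ_of_mul_nonneg hX (cvWalk_mul_nonneg_of_lt_cvTau_succ hl hn), ih (by omega)]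

theorem cvSide_cvTau (hX : ∀ j, 1 ≤ j → X j = 1 ∨ X j = -1)
    (hinf : (cvCrossings X).Infinite) (l : ℕ) : cvSide X (cvTau X l) = (-1) ^ l * X 1 := by
  induction l with
  | zero => simp [cvTau, cvSide_zero hX]
  | succ l ih =>
    obtain ⟨n, hn, hl, hneg⟩ := exists_cvTau_succ_eq hinf l
    rw [hn, cvSide_succ_of_mul_neg hX hneg, cvSide_eq_cvSide_cvTau hX hl (by omega), ih]
    ring

theorem cvWalk_cvTau_succ (hX : ∀ j, 1 ≤ j → X j = 1 ∨ X j = -1)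
    (hinf : (cvCrossings X).Infinite) (l : ℕ) : cvWalk X (cvTau X (l + 1)) = 0 := by
  obtain ⟨n, hn, -, hneg⟩ := exists_cvTau_succ_eq hinf l
  rw [hn, cvWalk_succ_eq_zero_of_mul_neg hX hneg]

theorem cvWalk_cvTau_succ_sub_one (hX : ∀ j, 1 ≤ j → X j = 1 ∨ X j = -1)
    (hinf : (cvCrossings X).Infinite) (l : ℕ) :
    cvWalk X (cvTau X (l + 1) - 1) = (-1) ^ l * X 1 := by
  obtain ⟨n, hn, hl, hneg⟩ := exists_cvTau_succ_eq hinf l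
  rw [hn, Nat.add_sub_cancel, ← cvSide_cvTau hX hinf,
    ← cvSide_eq_cvSide_cvTau hX hl (by omega),
    cvSide_eq_cvWalk hX (cvWalk_succ_eq_zero_of_mul_neg hX hneg)]

end CrossingTimes

section Transform

theorem cvXbar_eq (hinf : (cvCrossings X).Infinite) {l j : ℕ} (hl : cvTau X l < j)
    (hj : j ≤ cvTau X (l + 1)) : cvXbar X j = -((-1) ^ l * X 1 * X (j + 1)) := by
  have hmono := cvTau_strictMono hinf
  have block_unique : ∀ m, cvTau X m + 1 ≤ j ∧ j ≤ cvTau X (m + 1) → m = l := by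
    rintro m ⟨hm, hm'⟩
    have : m < l + 1 := hmono.lt_iff_lt.1 (by omega)
    have : l < m + 1 := hmono.lt_iff_lt.1 (by omega)
    omega
  have l_mem : l ∈ Finset.range (j + 1) := by
    have := hmono.le_apply (x := l)
    simp only [Finset.mem_range]
    omega
  rw [cvXbar, Finset.sum_eq_single_of_mem l l_mem
    fun m _ hm ↦ by rw [if_neg (mt (block_unique m) hm), mul_zero], if_pos ⟨hl, hj⟩]
  ring

theorem cvSbar_add_mul_cvWalk_succ_eq (hinf : (cvCrossings X).Infinite) {l m n : ℕ}
    (hl : cvTau X l ≤ m) (hmn : m ≤ n) (hn : n ≤ cvTau X (l + 1)) :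
    cvSbar X n + (-1) ^ l * X 1 * cvWalk X (n + 1) =
      cvSbar X m + (-1) ^ l * X 1 * cvWalk X (m + 1) := by
  induction n, hmn using Nat.le_induction with
  | base => rfl
  | succ n hmn ih =>
    rw [← ih (by omega), cvSbar_succ, cvXbar_eq hinf (by omega) hn, cvWalk_succ X (n + 1)]
    ring

end Transform

theorem cv_first_zero_case_ii1_general (hX : ∀ j, 1 ≤ j → X j = 1 ∨ X j = -1)
    (hinf : (cvCrossings X).Infinite) {l q : ℕ} (hY : cvYbar X q = 0)
    (hq : q + 2 = cvTau X (l + 1)) :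
    (∀ k, cvTau X l < k → k < cvTau X (l + 1) → cvWalk X k ≠ 0) ∧
      cvWalk X (cvTau X (l + 1)) = 0 := by
  refine ⟨fun k hlk hk hzero ↦ ?_, cvWalk_cvTau_succ hX hinf l⟩
  obtain ⟨m, rfl⟩ := Nat.exists_eq_add_one_of_ne_zero (Nat.ne_zero_of_lt hlk)
  have hmax : cvSbar X m ≤ cvSbar X q := le_of_cvYof_eq_zero hY (by omega)
  have hconst := cvSbar_add_mul_cvWalk_succ_eq hinf (l := l) (m := m) (n := q)
    (by omega) (by omega) (by omega)
  have hlast : cvWalk X (q + 1) = (-1) ^ l * X 1 := by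
    rw [← cvWalk_cvTau_succ_sub_one hX hinf, ← hq]
    rfl
  have hpos : 0 < (-1) ^ l * X 1 * cvWalk X (q + 1) := by
    have hX₁ : X 1 ≠ 0 := by rcases hX 1 le_rfl with h | h <;> simp [h]
    rw [hlast]
    exact mul_self_pos.2 (mul_ne_zero (by simp) hX₁)
  rw [hzero, mul_zero] at hconst
  omega

/-- If `[p, q]` is an excursion of `Ȳ` contained in `[τ l, τ (l+1)]` with
`q = τ (l+1) − 2`, then `S k ≠ 0` for every `τ l < k < τ (l+1)`; that is, the first zero
of `S` after `τ l` is `τ (l+1)`. -/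
theorem cv_first_zero_case_ii1 (X : ℕ → ℤ) (hX : ∀ j, 1 ≤ j → X j = 1 ∨ X j = -1)
    (hinf : {i : ℕ | 1 ≤ i ∧ cvWalk X (i - 1) * cvWalk X (i + 1) < 0}.Infinite)
    (l p q : ℕ) (hexc : cvIsExcursion X p q)
    (hp : cvTau X l ≤ p) (hq : q ≤ cvTau X (l + 1)) (hq2 : q + 2 = cvTau X (l + 1)) :
    (∀ k, cvTau X l < k → k < cvTau X (l + 1) → cvWalk X k ≠ 0) ∧
      cvWalk X (cvTau X (l + 1)) = 0 :=
  cv_first_zero_case_ii1_general hX hinf hexc.2.2.2.1 hq2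
end
end
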